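/- Let A be a unital C*-algebra, H a complex Hilbert space, ρ = [ρ_ij] a completely n-positive linear map from A to L(H), and (Φ_ρ, H_ρ, V_{ρ,1}, …, V_{ρ,n}) a Stinespring representation of ρ. Fix i, j ∈ {1, …, n} with i ≠ j, and suppose that ρ_ii(1) = I_H, ρ_jj(1) = I_H, and there is a unitary element u ∈ A with ρ_ij(u) = I_H. Then Φ_ρ(u) V_{ρ,j} = V_{ρ,i}. -/

import Mathlib

/-!
Fix `ξ : H` and put `x = Φ u (V j ξ)`, `y = V i ξ`. The representation `Φ` is unital because
`Φ 1` fixes every `Φ a (V k ξ)` and these vectors span a dense subspace. The three hypotheses on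
`ρ` then say that `⟪x, x⟫ = ⟪y, y⟫ = ⟪y, x⟫ = ⟪ξ, ξ⟫`, using `u⋆ u = 1` for the first one, and this
is the equality case of Cauchy-Schwarz: `‖x - y‖² = 0`.
-/

noncomputable section

open ContinuousLinearMap

universe u v

variable {A : Type u} [CStarAlgebra A]
variable {H : Type v} [NormedAddCommGroup H] [InnerProductSpace ℂ H] [CompleteSpace H]

/-- A map between star algebras is *completely positive* if each of its matrix
amplifications preserves positivity, where an element of a C⋆-algebra is positive
iff it is of the form `star y * y`. -/
def IsCP {R S : Type*} [NonUnitalSemiring R] [StarRing R]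
    [NonUnitalSemiring S] [StarRing S] (φ : R → S) : Prop :=
  ∀ (m : ℕ) (x : Matrix (Fin m) (Fin m) R),
    (∃ y : Matrix (Fin m) (Fin m) R, x = star y * y) →
    ∃ z : Matrix (Fin m) (Fin m) S, x.map φ = star z * z

/-- The map `Mₙ(A) → Mₙ(L(H))` induced by an `n × n` matrix of maps,
`[a_ij] ↦ [ρ_ij (a_ij)]`. -/
def matApply {n : ℕ} (ρ : Fin n → Fin n → (A →L[ℂ] (H →L[ℂ] H)))
    (x : Matrix (Fin n) (Fin n) A) : Matrix (Fin n) (Fin n) (H →L[ℂ] H) :=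
  Matrix.of fun i j => ρ i j (x i j)

/-- An `n × n` matrix of continuous linear maps from `A` to `L(H)` is a
*completely `n`-positive linear map* if the induced map `Mₙ(A) → Mₙ(L(H))` is
completely positive. -/
def IsCnP {n : ℕ} (ρ : Fin n → Fin n → (A →L[ℂ] (H →L[ℂ] H))) : Prop :=
  IsCP (matApply ρ)

/-- `(Φ, K, V 0, …, V (n-1))` is a Stinespring representation of the completely
`n`-positive map `ρ = [ρ_ij]` : `Φ` is a (continuous) `*`-homomorphism,
`ρ_ij (a) = (V i)* (Φ a) (V j)`, and the vectors `Φ a (V i ξ)` span a dense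
subspace of `K`. -/
def IsStinespringRep {n : ℕ} (ρ : Fin n → Fin n → (A →L[ℂ] (H →L[ℂ] H)))
    {K : Type*} [NormedAddCommGroup K] [InnerProductSpace ℂ K] [CompleteSpace K]
    (Φ : A →⋆ₙₐ[ℂ] (K →L[ℂ] K)) (V : Fin n → (H →L[ℂ] K)) : Prop :=
  Continuous (⇑Φ) ∧
  (∀ (i j : Fin n) (a : A), ρ i j a = (adjoint (V i)).comp ((Φ a).comp (V j))) ∧
  Dense ((Submodule.span ℂ
    {x : K | ∃ (a : A) (ξ : H) (i : Fin n), x = Φ a (V i ξ)} : Submodule ℂ K) : Set K)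

/-- Nondegeneracy of a Stinespring representation makes `Φ` unital, although it is only assumed to
be a non-unital `*`-homomorphism. -/
lemma IsStinespringRep.map_one {n : ℕ} {ρ : Fin n → Fin n → (A →L[ℂ] (H →L[ℂ] H))}
    {K : Type*} [NormedAddCommGroup K] [InnerProductSpace ℂ K] [CompleteSpace K]
    {Φ : A →⋆ₙₐ[ℂ] (K →L[ℂ] K)} {V : Fin n → (H →L[ℂ] K)}
    (h : IsStinespringRep ρ Φ V) : Φ 1 = 1 := by
  refine ContinuousLinearMap.ext_on h.2.2 ?_
  rintro _ ⟨a, ξ, k, rfl⟩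
  rw [← mul_apply_eq_comp, ← _root_.map_mul, one_mul, one_apply_eq_self]

lemma IsStinespringRep.inner_apply {n : ℕ} {ρ : Fin n → Fin n → (A →L[ℂ] (H →L[ℂ] H))}
    {K : Type*} [NormedAddCommGroup K] [InnerProductSpace ℂ K] [CompleteSpace K]
    {Φ : A →⋆ₙₐ[ℂ] (K →L[ℂ] K)} {V : Fin n → (H →L[ℂ] K)}
    (h : IsStinespringRep ρ Φ V) (k l : Fin n) (a : A) (ξ η : H) :
    inner ℂ (V k ξ) (Φ a (V l η)) = inner ℂ ξ (ρ k l a η) := by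
  rw [h.2.1 k l a, ContinuousLinearMap.comp_apply, ContinuousLinearMap.comp_apply,
    ContinuousLinearMap.adjoint_inner_right]

/-- If `ρ_ii(1) = ρ_jj(1) = I_H` and `ρ_ij(u) = I_H` for a unitary `u ∈ A`, then
`Φ_ρ(u) V_{ρ,j} = V_{ρ,i}`. -/
theorem statement13 {n : ℕ} (ρ : Fin n → Fin n → (A →L[ℂ] (H →L[ℂ] H)))
    (hρ : IsCnP ρ)
    {K : Type*} [NormedAddCommGroup K] [InnerProductSpace ℂ K] [CompleteSpace K]
    (Φ : A →⋆ₙₐ[ℂ] (K →L[ℂ] K)) (V : Fin n → (H →L[ℂ] K))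
    (h : IsStinespringRep ρ Φ V)
    (i j : Fin n) (hij : i ≠ j)
    (hii : ρ i i 1 = 1) (hjj : ρ j j 1 = 1)
    (u : A) (hu : u ∈ unitary A) (hu1 : ρ i j u = 1) :
    (Φ u).comp (V j) = V i := by
  ext ξ
  rw [ContinuousLinearMap.comp_apply]
  have hyy : inner ℂ (V i ξ) (V i ξ) = inner ℂ ξ ξ := by
    simpa [h.map_one, hii] using h.inner_apply i i 1 ξ ξ
  have hyx : inner ℂ (V i ξ) (Φ u (V j ξ)) = inner ℂ ξ ξ := by
    simpa [hu1] using h.inner_apply i j u ξ ξ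
  have hxx : inner ℂ (Φ u (V j ξ)) (Φ u (V j ξ)) = inner ℂ ξ ξ := by
    rw [← ContinuousLinearMap.adjoint_inner_right, ← ContinuousLinearMap.star_eq_adjoint,
      ← mul_apply_eq_comp, ← map_star, ← _root_.map_mul,
      Unitary.star_mul_self_of_mem hu, h.inner_apply, hjj, one_apply_eq_self]
  have hxy : inner ℂ (Φ u (V j ξ)) (V i ξ) = inner ℂ ξ ξ := by
    rw [← inner_conj_symm, hyx, inner_conj_symm]
  rw [← sub_eq_zero, ← inner_self_eq_zero (𝕜 := ℂ), inner_sub_sub_self, hxx, hyx, hxy, hyy]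
  ring
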